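/- Let two lines in ℝ³ be given by base points a, a' ∈ ℝ³ and direction vectors v, v' ∈ ℝ³ with v₃ ≠ 0 and v'₃ ≠ 0. Define their Plücker coordinates q = v, p = a × v (cross product) and q' = v', p' = a' × v', and the associated points of ℝ^{2,2}: x = ((p₂+q₂)/q₃, (−p₁−q₁)/q₃, (p₂−q₂)/q₃, (−p₁+q₁)/q₃) and x' defined analogously from (p', q'). Then the two lines intersect or are parallel (equivalently, the sets {a + t·v : t ∈ ℝ} and {a' + t·v' : t ∈ ℝ} have a common point, or v and v' are linearly dependent) if and only if ‖x − x'‖² = 0. -/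

import Mathlib

/-!
Write `P`, `Q` for the differences of the coordinates `p / q₃`, `q / q₃` of the two lines.
The neutral form of `x - x'` is `4 (P₁ Q₁ + P₂ Q₂) = 4 P · Q`, since `Q₃ = 0`. As `p · q = 0` and
`p' · q' = 0`, only the mixed terms `-(p · q' + p' · q) / (q₃ q₃')` survive in `P · Q`, and
`p · q' + p' · q = det (a - a', v, v')` (`q22_mul_eq_det3`). So null separation means that
`a - a'`, `v`, `v'` are linearly dependent, that is, `v` and `v'` are dependent or `a - a'` lies in
their span; the latter says that the lines meet.
-/

noncomputable section

/-- The neutral quadratic form `‖x‖² = x₁² + x₂² − x₃² − x₄²` on ℝ⁴. -/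
def q22 (x : Fin 4 → ℝ) : ℝ := x 0 ^ 2 + x 1 ^ 2 - x 2 ^ 2 - x 3 ^ 2

/-- The cross product in ℝ³. -/
def cross3 (a v : Fin 3 → ℝ) : Fin 3 → ℝ :=
  ![a 1 * v 2 - a 2 * v 1, a 2 * v 0 - a 0 * v 2, a 0 * v 1 - a 1 * v 0]

/-- The point of ℝ^{2,2} associated to the line through `a` with direction `v` (with `v 2 ≠ 0`),
in terms of its Plücker coordinates `q = v`, `p = a × v`:
`x = ((p₂+q₂)/q₃, (−p₁−q₁)/q₃, (p₂−q₂)/q₃, (−p₁+q₁)/q₃)`. -/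
def lineCoords (a v : Fin 3 → ℝ) : Fin 4 → ℝ :=
  ![(cross3 a v 1 + v 1) / v 2, (-cross3 a v 0 - v 0) / v 2,
    (cross3 a v 1 - v 1) / v 2, (-cross3 a v 0 + v 0) / v 2]

/-- The mixed product `det (b, v, w)`, expanded along its first row. -/
def det3 (b v w : Fin 3 → ℝ) : ℝ :=
  b 0 * (v 1 * w 2 - v 2 * w 1) - b 1 * (v 0 * w 2 - v 2 * w 0)
    + b 2 * (v 0 * w 1 - v 1 * w 0)

/-- Up to the factor `-4`, the neutral distance is the polarized Plücker form of the two lines,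
normalized by `q₃ = q₃' = 1`. -/
lemma q22_mul_eq_det3 (a v a' v' : Fin 3 → ℝ) (hv : v 2 ≠ 0) (hv' : v' 2 ≠ 0) :
    q22 (lineCoords a v - lineCoords a' v') * (v 2 * v' 2) = -4 * det3 (a - a') v v' := by
  simp [q22, lineCoords, cross3, det3]
  field_simp
  ring

lemma q22_eq_zero_iff (a v a' v' : Fin 3 → ℝ) (hv : v 2 ≠ 0) (hv' : v' 2 ≠ 0) :
    q22 (lineCoords a v - lineCoords a' v') = 0 ↔ det3 (a - a') v v' = 0 := by
  have h := q22_mul_eq_det3 a v a' v' hv hv'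
  constructor
  · intro h0
    rw [h0] at h
    linarith
  · intro h0
    rw [h0, mul_zero] at h
    exact (mul_eq_zero.mp h).resolve_right (mul_ne_zero hv hv')

theorem lines_meet_or_parallel_iff_null_separated (a v a' v' : Fin 3 → ℝ)
    (hv : v 2 ≠ 0) (hv' : v' 2 ≠ 0) :
    ((∃ t t' : ℝ, a + t • v = a' + t' • v') ∨ ¬ LinearIndependent ℝ ![v, v']) ↔
      q22 (lineCoords a v - lineCoords a' v') = 0 := by
  rw [q22_eq_zero_iff a v a' v' hv hv']
  constructor
  · rintro (⟨t, t', h⟩ | h)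
    · have hd : a - a' = t' • v' - t • v := by
        rw [eq_sub_of_add_eq h]
        abel
      rw [hd]
      simp only [det3, Pi.sub_apply, Pi.smul_apply, smul_eq_mul]
      ring
    · rw [LinearIndependent.pair_iff] at h
      push Not at h
      obtain ⟨s, t, h, hst⟩ := h
      have h0 := congrFun h 0
      have h1 := congrFun h 1
      have h2 := congrFun h 2
      simp only [Pi.add_apply, Pi.smul_apply, smul_eq_mul, Pi.zero_apply] at h0 h1 h2
      -- As `v' 2 ≠ 0`, the coefficient of `v` in the relation cannot vanish.
      have hs : s ≠ 0 := by
        intro hs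
        subst hs
        have : t = 0 := by simpa [hv'] using h2
        exact hst rfl this
      have key : s * det3 (a - a') v v' = 0 := by
        simp only [det3]
        linear_combination
          ((a - a') 2 * v' 1 - (a - a') 1 * v' 2) * h0
          + ((a - a') 0 * v' 2 - (a - a') 2 * v' 0) * h1
          + ((a - a') 1 * v' 0 - (a - a') 0 * v' 1) * h2
      exact (mul_eq_zero.mp key).resolve_left hs
  · intro h
    simp only [det3, Pi.sub_apply] at h
    -- Two coordinates of `a + t • v = a' + t' • v'` are solved by Cramer's rule;
    -- the vanishing mixed product gives the remaining one.
    by_cases hm : v 0 * v' 2 - v 2 * v' 0 = 0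
    · by_cases hn : v 1 * v' 2 - v 2 * v' 1 = 0
      · right
        rw [LinearIndependent.pair_iff]
        intro hli
        refine hv' (hli (v' 2) (-v 2) ?_).1
        ext i
        fin_cases i <;> simp <;> linarith
      · left
        obtain ⟨k, hk⟩ : ∃ k, k * (v 1 * v' 2 - v 2 * v' 1) = 1 := ⟨_, inv_mul_cancel₀ hn⟩
        refine ⟨k * ((a' 1 - a 1) * v' 2 - (a' 2 - a 2) * v' 1),
          k * ((a' 1 - a 1) * v 2 - (a' 2 - a 2) * v 1), ?_⟩
        ext i
        fin_cases i <;> simp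
        · linear_combination (a' 0 - a 0) * hk + k * h
        · linear_combination (a' 1 - a 1) * hk
        · linear_combination (a' 2 - a 2) * hk
    · left
      obtain ⟨k, hk⟩ : ∃ k, k * (v 0 * v' 2 - v 2 * v' 0) = 1 := ⟨_, inv_mul_cancel₀ hm⟩
      refine ⟨k * ((a' 0 - a 0) * v' 2 - (a' 2 - a 2) * v' 0),
        k * ((a' 0 - a 0) * v 2 - (a' 2 - a 2) * v 0), ?_⟩
      ext i
      fin_cases i <;> simp
      · linear_combination (a' 0 - a 0) * hk
      · linear_combination (a' 1 - a 1) * hk - k * h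
      · linear_combination (a' 2 - a 2) * hk
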